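/- Let p be an at most isolated singular point of D (as in the context). Then rk M'_f(p) = n if and only if p is a smooth point of D, i.e. if and only if (∂g/∂y_i)(q) ≠ 0 for some i ∈ {1,…,n}. -/

import Mathlib

open MvPolynomial

noncomputable section

/-- The Jacobian syzygy module `K` of `f`, as a set:
tuples `a = (a_0, …, a_n)` of polynomials with `∑ a_i ∂f/∂x_i = 0`. -/
def syzSet (n : ℕ) (f : MvPolynomial (Fin (n + 1)) ℂ) :
    Set (Fin (n + 1) → MvPolynomial (Fin (n + 1)) ℂ) :=
  {a | ∑ i, a i * pderiv i f = 0}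

/-- The image of the syzygy module under coordinatewise evaluation at `p`. -/
def evSyz (n : ℕ) (f : MvPolynomial (Fin (n + 1)) ℂ) (p : Fin (n + 1) → ℂ) :
    Set (Fin (n + 1) → ℂ) :=
  (fun a => fun i => eval p (a i)) '' syzSet n f

/-- The syzygy rank `rk M'_f(p)`. -/
def syzRank (n : ℕ) (f : MvPolynomial (Fin (n + 1)) ℂ) (p : Fin (n + 1) → ℂ) : ℕ :=
  Module.finrank ℂ (Submodule.span ℂ (evSyz n f p))

/-- The augmented syzygy rank `rk M_f(p)`. -/
def augSyzRank (n : ℕ) (f : MvPolynomial (Fin (n + 1)) ℂ) (p : Fin (n + 1) → ℂ) : ℕ :=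
  Module.finrank ℂ (Submodule.span ℂ (evSyz n f p ∪ {p}))

/-- The dehomogenization `g(y_1,…,y_n) = f(1,y_1,…,y_n)`. -/
def dehom (n : ℕ) (f : MvPolynomial (Fin (n + 1)) ℂ) : MvPolynomial (Fin n) ℂ :=
  aeval (Fin.cons (1 : MvPolynomial (Fin n) ℂ) fun i => X i) f

/-- `D = V(f)` is strongly Euler homogeneous at `p` (with `p_0 = 1`): there exist an open
neighborhood `U` of `q = (p_1,…,p_n)` and analytic functions `a_i` on `U` vanishing at `q`
with `g = ∑ a_i ∂g/∂y_i` on `U`, where `g` is the dehomogenization of `f`. -/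
def StronglyEulerHomogeneousAt (n : ℕ) (f : MvPolynomial (Fin (n + 1)) ℂ)
    (p : Fin (n + 1) → ℂ) : Prop :=
  ∃ (U : Set (Fin n → ℂ)) (a : Fin n → (Fin n → ℂ) → ℂ),
    IsOpen U ∧ (fun i => p i.succ) ∈ U ∧
    (∀ i, ∀ y ∈ U, AnalyticAt ℂ (a i) y) ∧
    (∀ i, a i (fun j => p j.succ) = 0) ∧
    ∀ y ∈ U,
      eval y (dehom n f) = ∑ i, a i y * eval y (pderiv i (dehom n f))

/-- `p` is an at most isolated singular point of `D`: on some neighborhood of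
`q = (p_1,…,p_n)`, the only point where `g` and all its partial derivatives vanish is `q`. -/
def AtMostIsolatedSingAt (n : ℕ) (f : MvPolynomial (Fin (n + 1)) ℂ)
    (p : Fin (n + 1) → ℂ) : Prop :=
  ∃ U₀ : Set (Fin n → ℂ), IsOpen U₀ ∧ (fun i => p i.succ) ∈ U₀ ∧
    ∀ y ∈ U₀, (eval y (dehom n f) = 0 ∧ ∀ i, eval y (pderiv i (dehom n f)) = 0) →
      y = (fun i => p i.succ)

/-!
At a smooth point, the Koszul syzygies already span the kernel of the differential of `f` at `p`,
which has dimension `n`.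

A syzygy `a` is a polynomial vector field annihilating `f`, so its flow preserves the singular
locus of the affine cone `f = 0`. If `p` is an isolated singular point, this locus is the line
`ℂ p` near `p`, hence `a(p)` is a multiple of `p` and the syzygy rank is at most `1`. For `n ≥ 2`
this is less than `n`. For `n ≤ 1` a singular point cannot exist: the homogeneous ideal of `p` is
generated by one linear form, whose square would divide the squarefree form `f`.
-/

open Filter Topology

section Homogeneous

variable {R A σ : Type*}

lemma aeval_smul_of_isHomogeneous [CommSemiring R] [CommSemiring A] [Algebra R A]
    {h : MvPolynomial σ R} {m : ℕ} (hh : h.IsHomogeneous m) (c : A) (x : σ → A) :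
    aeval (c • x) h = c ^ m * aeval x h := by
  simp only [aeval_def, eval₂_eq, Finset.mul_sum]
  refine Finset.sum_congr rfl fun s hs => ?_
  simp only [Pi.smul_apply, smul_eq_mul, mul_pow, Finset.prod_mul_distrib,
    hh.degree_eq_sum_deg_support hs, ← Finset.prod_pow_eq_pow_sum]
  ring

lemma eval_smul_of_isHomogeneous [CommSemiring R] {h : MvPolynomial σ R} {m : ℕ}
    (hh : h.IsHomogeneous m) (c : R) (x : σ → R) :
    eval (c • x) h = c ^ m * eval x h := by
  simpa only [aeval_eq_eval] using aeval_smul_of_isHomogeneous hh c x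

end Homogeneous

section PointIdeal

variable {R σ : Type*} [CommRing R] {p : σ → R} {k : σ} {h : MvPolynomial σ R} {m : ℕ}

/-- The linear form `x_i - p_i x_k`, which vanishes at the projective point `p` when `p_k = 1`. -/
def pointForm (p : σ → R) (k i : σ) : MvPolynomial σ R :=
  X i - C (p i) * X k

/-- The homogeneous ideal of the projective point `p`, in the chart `p_k = 1`. -/
def pointIdeal (p : σ → R) (k : σ) : Ideal (MvPolynomial σ R) :=
  Ideal.span (Set.range (pointForm p k))

lemma pointForm_self (hpk : p k = 1) : pointForm p k k = 0 := by
  simp [pointForm, hpk]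

lemma pderiv_pointForm [DecidableEq σ] {i : σ} (hi : i ≠ k) (j : σ) :
    pderiv i (pointForm p k j) = Pi.single (M := fun _ => MvPolynomial σ R) i 1 j := by
  rw [pointForm, map_sub, pderiv_C_mul, pderiv_X_of_ne hi.symm, mul_zero, sub_zero, pderiv_X]

lemma mem_pointIdeal_of_eval_eq_zero (hh : h.IsHomogeneous m) (hp : eval p h = 0) :
    h ∈ pointIdeal p k := by
  let quot := Ideal.Quotient.mkₐ R (pointIdeal p k)
  have quot_X : quot ∘ X = quot (X k) • (algebraMap R _ ∘ p) := by
    funext i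
    have : X i - C (p i) * X k ∈ pointIdeal p k := Ideal.subset_span ⟨i, rfl⟩
    calc quot (X i) = quot (C (p i) * X k) := Ideal.Quotient.eq.2 this
      _ = quot (X k) * algebraMap R _ (p i) := by
        rw [map_mul, mul_comm, ← algebraMap_eq, AlgHom.commutes]
  rw [← Ideal.Quotient.eq_zero_iff_mem]
  calc quot h = aeval (quot ∘ X) h := DFunLike.congr_fun (aeval_unique quot) h
    _ = quot (X k) ^ m * aeval (algebraMap R _ ∘ p) h := by
      rw [quot_X, aeval_smul_of_isHomogeneous hh]
    _ = 0 := by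
      rw [aeval_algebraMap_apply, aeval_eq_eval, hp, map_zero, mul_zero]

lemma mem_pointIdeal_sq_of_eval_pderiv_eq_zero [Finite σ] (hpk : p k = 1)
    (hh : h.IsHomogeneous m) (hp : eval p h = 0) (hdp : ∀ i ≠ k, eval p (pderiv i h) = 0) :
    h ∈ pointIdeal p k ^ 2 := by
  classical
  have := Fintype.ofFinite σ
  obtain ⟨c, rfl⟩ := Ideal.mem_span_range_iff_exists_fun.1
    (mem_pointIdeal_of_eval_eq_zero (k := k) hh hp)
  have form_mem (j : σ) : pointForm p k j ∈ pointIdeal p k := Ideal.subset_span ⟨j, rfl⟩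
  refine Ideal.sum_mem _ fun i _ => ?_
  rcases eq_or_ne i k with rfl | hik
  · simp [pointForm_self hpk]
  have pderiv_eq : pderiv i (∑ j, c j * pointForm p k j) =
      ∑ j, pderiv i (c j) * pointForm p k j + c i := by
    simp [pderiv_mul, pderiv_pointForm hik, Finset.sum_add_distrib, Pi.single_apply,
      -Derivation.leibniz]
  have coeff_mem : c i ∈ pointIdeal p k := by
    refine (Ideal.add_mem_iff_right _ ?_).1
      (pderiv_eq ▸ mem_pointIdeal_of_eval_eq_zero hh.pderiv (hdp i hik))
    exact Ideal.sum_mem _ fun j _ => Ideal.mul_mem_left _ _ (form_mem j)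
  exact pow_two (pointIdeal p k) ▸ Ideal.mul_mem_mul coeff_mem (form_mem i)

lemma pointIdeal_eq_span_singleton {n : ℕ} (hn : n ≤ 1) {p : Fin (n + 1) → R} (hp0 : p 0 = 1) :
    pointIdeal p 0 = Ideal.span {pointForm p 0 (Fin.last n)} := by
  refine le_antisymm (Ideal.span_le.2 ?_)
    (Ideal.span_mono (Set.singleton_subset_iff.2 ⟨_, rfl⟩))
  rintro _ ⟨i, rfl⟩
  rcases eq_or_ne i 0 with rfl | hi
  · simp [pointForm_self hp0]
  · obtain rfl : i = Fin.last n := by ext; simp only [Fin.val_last]; grind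
    exact Ideal.mem_span_singleton_self _

lemma not_squarefree_of_eval_pderiv_eq_zero [Nontrivial R] {n : ℕ} (hn : n ≤ 1)
    {h : MvPolynomial (Fin (n + 1)) R} (hh : h.IsHomogeneous m) {p : Fin (n + 1) → R}
    (hp0 : p 0 = 1) (hp : eval p h = 0) (hdp : ∀ i, eval p (pderiv i h) = 0) :
    ¬ Squarefree h := by
  intro hsf
  have sq_dvd : pointForm p 0 (Fin.last n) ^ 2 ∣ h := by
    rw [← Ideal.mem_span_singleton, ← Ideal.span_singleton_pow,
      ← pointIdeal_eq_span_singleton hn hp0]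
    exact mem_pointIdeal_sq_of_eval_pderiv_eq_zero hp0 hh hp fun i _ => hdp i
  have isUnit_eval := (hsf _ (pow_two (pointForm p 0 (Fin.last n)) ▸ sq_dvd)).map (eval p)
  simp [pointForm, hp0] at isUnit_eval

end PointIdeal

section Derivation

variable {R σ : Type*} [CommRing R]
  (D : Derivation R (MvPolynomial σ R) (MvPolynomial σ R)) (h : MvPolynomial σ R)

lemma derivation_apply_eq_sum_pderiv [Fintype σ] : D h = ∑ i, D (X i) * pderiv i h := by
  classical
  induction h using MvPolynomial.induction_on with
  | C a => simp
  | add h₁ h₂ ih₁ ih₂ => simp only [map_add, ih₁, ih₂, mul_add, Finset.sum_add_distrib]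
  | mul_X h k ih =>
    simp [ih, mul_add, Finset.sum_add_distrib, Finset.mul_sum, pderiv_X, Pi.single_apply,
      mul_comm, mul_left_comm]

lemma derivation_apply_pderiv [Fintype σ] (j : σ) :
    D (pderiv j h) = pderiv j (D h) - ∑ i, pderiv j (D (X i)) * pderiv i h := by
  classical
  have commutator_X (i : σ) : ⁅D, pderiv j⁆ (X i) = -pderiv j (D (X i)) := by
    simp [Derivation.commutator_apply, pderiv_X, Pi.single_apply, apply_ite D]
  have commutator_eq := derivation_apply_eq_sum_pderiv ⁅D, pderiv j⁆ h
  simp only [commutator_X, Derivation.commutator_apply, neg_mul, Finset.sum_neg_distrib]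
    at commutator_eq
  linear_combination commutator_eq

lemma derivation_apply_mem_span {A : Type*} [CommRing A] [Algebra R A] (D : Derivation R A A)
    {S : Set A} (hS : ∀ g ∈ S, D g ∈ Ideal.span S) {g : A} (hg : g ∈ Ideal.span S) :
    D g ∈ Ideal.span S := by
  induction hg using Submodule.span_induction with
  | mem g hg => exact hS g hg
  | zero => simp
  | add g₁ g₂ _ _ ih₁ ih₂ => simpa using Ideal.add_mem _ ih₁ ih₂
  | smul r g hg ih =>
    rw [smul_eq_mul, D.leibniz]
    exact Ideal.add_mem _ (Ideal.mul_mem_left _ r ih) (Ideal.mul_mem_right _ _ hg)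

/-- The Tjurina ideal of `h`, generated by `h` and its first partial derivatives: its zero locus
is the singular locus of the affine hypersurface `h = 0`. -/
def tjurinaIdeal (h : MvPolynomial σ R) : Ideal (MvPolynomial σ R) :=
  Ideal.span (insert h (Set.range fun i => pderiv i h))

variable {D h}

lemma derivation_apply_mem_tjurinaIdeal [Finite σ] (hD : h ∣ D h) {g : MvPolynomial σ R}
    (hg : g ∈ tjurinaIdeal h) : D g ∈ tjurinaIdeal h := by
  have := Fintype.ofFinite σ
  have self_mem : h ∈ tjurinaIdeal h := Ideal.subset_span (Set.mem_insert _ _)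
  have pderiv_mem (i : σ) : pderiv i h ∈ tjurinaIdeal h :=
    Ideal.subset_span (Set.mem_insert_of_mem _ ⟨i, rfl⟩)
  obtain ⟨r, hr⟩ := hD
  refine derivation_apply_mem_span D ?_ hg
  rintro _ (rfl | ⟨j, rfl⟩)
  · exact hr ▸ Ideal.mul_mem_right _ _ self_mem
  · rw [derivation_apply_pderiv, hr, pderiv_mul]
    exact Ideal.sub_mem _
      (Ideal.add_mem _ (Ideal.mul_mem_right _ _ (pderiv_mem j)) (Ideal.mul_mem_right _ _ self_mem))
      (Ideal.sum_mem _ fun i _ => Ideal.mul_mem_left _ _ (pderiv_mem i))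

end Derivation

lemma mem_zeroLocus_tjurinaIdeal {K σ : Type*} [Field K] {h : MvPolynomial σ K} {x : σ → K} :
    x ∈ zeroLocus K (tjurinaIdeal h) ↔ eval x h = 0 ∧ ∀ i, eval x (pderiv i h) = 0 := by
  simp [tjurinaIdeal, zeroLocus_span]

section Flow

lemma isIntegralCurveAt_eventuallyEq_of_contDiffAt {E : Type*} [NormedAddCommGroup E]
    [NormedSpace ℝ E] {v : E → E} {γ γ' : ℝ → E} {t₀ : ℝ} (hv : ContDiffAt ℝ 1 v (γ t₀))
    (hγ : IsIntegralCurveAt γ (fun _ => v) t₀) (hγ' : IsIntegralCurveAt γ' (fun _ => v) t₀)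
    (heq : γ t₀ = γ' t₀) : γ =ᶠ[𝓝 t₀] γ' := by
  obtain ⟨K, s, hs, hlip⟩ := hv.exists_lipschitzOnWith
  exact ODE_solution_unique_of_eventually (.of_forall fun _ => hlip)
    (hγ.and (hγ.continuousAt hs)) (hγ'.and (hγ'.continuousAt (heq ▸ hs))) heq

variable {𝕜 σ : Type*} [RCLike 𝕜] {D : Derivation 𝕜 (MvPolynomial σ 𝕜) (MvPolynomial σ 𝕜)}
  {γ : ℝ → σ → 𝕜}

/-- The polynomial vector field on affine space with components `D x_i`, whose integral curves are
the flow lines of `D`: along them the derivative of a polynomial function `h` is `D h`. -/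
def polyVectorField (D : Derivation 𝕜 (MvPolynomial σ 𝕜) (MvPolynomial σ 𝕜)) (x : σ → 𝕜) :
    σ → 𝕜 :=
  fun i => eval x (D (X i))

lemma hasDerivAt_eval_of_hasDerivAt_polyVectorField {t : ℝ}
    (hγ : HasDerivAt γ (polyVectorField D (γ t)) t) (h : MvPolynomial σ 𝕜) :
    HasDerivAt (fun s => eval (γ s) h) (eval (γ t) (D h)) t := by
  induction h using MvPolynomial.induction_on with
  | C a => simpa using hasDerivAt_const t a
  | add h₁ h₂ ih₁ ih₂ =>
    simp only [map_add]
    exact ih₁.add ih₂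
  | mul_X h k ih =>
    simp only [map_mul, eval_X]
    refine (ih.mul (hasDerivAt_pi.1 hγ k)).congr_deriv ?_
    simp only [polyVectorField, Derivation.leibniz, smul_eq_mul, map_add, map_mul, eval_X]
    ring

variable [Fintype σ]

lemma contDiff_eval (h : MvPolynomial σ 𝕜) : ContDiff ℝ 1 fun x : σ → 𝕜 => eval x h :=
  (contDiffOn_univ.1 ((AnalyticOnNhd.eval_mvPolynomial h).contDiffOn
    uniqueDiffOn_univ)).restrict_scalars ℝ

variable (D) in
lemma contDiff_polyVectorField : ContDiff ℝ 1 (polyVectorField D) :=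
  contDiff_pi.2 fun _ => contDiff_eval _

variable (D) in
lemma exists_isIntegralCurveAt_polyVectorField (p : σ → 𝕜) :
    ∃ γ : ℝ → σ → 𝕜, γ 0 = p ∧ IsIntegralCurveAt γ (fun _ => polyVectorField D) 0 := by
  obtain ⟨γ, hγ0, ε, hε, hγ⟩ := (contDiff_polyVectorField D).contDiffAt
    (x := p).exists_forall_mem_closedBall_exists_eq_forall_mem_Ioo_hasDerivAt₀ 0
  exact ⟨γ, hγ0, eventually_of_mem (Ioo_mem_nhds (by linarith) (by linarith)) hγ⟩

lemma eventually_mem_zeroLocus_of_isIntegralCurveAt {I : Ideal (MvPolynomial σ 𝕜)}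
    (hI : ∀ g ∈ I, D g ∈ I) {t₀ : ℝ}
    (hγ : IsIntegralCurveAt γ (fun _ => polyVectorField D) t₀)
    (hγ₀ : γ t₀ ∈ zeroLocus 𝕜 I) : ∀ᶠ t in 𝓝 t₀, γ t ∈ zeroLocus 𝕜 I := by
  obtain ⟨m, g, rfl⟩ := Submodule.fg_iff_exists_fin_generating_family.1 I.fg_of_isNoetherianRing
  have hDg (j : Fin m) : ∃ c : Fin m → MvPolynomial σ 𝕜, ∑ k, c k * g k = D (g j) :=
    Ideal.mem_span_range_iff_exists_fun.1 (hI _ (Ideal.subset_span ⟨j, rfl⟩))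
  choose c hc using hDg
  -- Along `γ` the vector `g ∘ γ` solves the linear system `z' = (c ∘ γ) z`, as does `z = 0`;
  -- pairing `z` with `γ` makes the system autonomous.
  let v : (σ → 𝕜) × (Fin m → 𝕜) → (σ → 𝕜) × (Fin m → 𝕜) := fun z =>
    (polyVectorField D z.1, fun j => ∑ k, eval z.1 (c j k) * z.2 k)
  have contDiff_v : ContDiff ℝ 1 v :=
    ((contDiff_polyVectorField D).comp contDiff_fst).prodMk <| contDiff_pi.2 fun j =>
      ContDiff.sum fun k _ => ((contDiff_eval (c j k)).comp contDiff_fst).mul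
        ((contDiff_apply ℝ 𝕜 k).comp contDiff_snd)
  have curve_eval : IsIntegralCurveAt (fun t => (γ t, fun j => eval (γ t) (g j)))
      (fun _ => v) t₀ := by
    filter_upwards [hγ] with t ht
    refine ht.prodMk (hasDerivAt_pi.2 fun j => ?_)
    simpa only [← hc, map_sum, map_mul] using
      hasDerivAt_eval_of_hasDerivAt_polyVectorField ht (g j)
  have curve_zero : IsIntegralCurveAt (fun t => (γ t, (0 : Fin m → 𝕜))) (fun _ => v) t₀ := by
    filter_upwards [hγ] with t ht
    refine ht.prodMk ((hasDerivAt_const t 0).congr_deriv ?_)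
    funext j
    simp
  have eval_g_γ₀ : (fun j => eval (γ t₀) (g j)) = 0 :=
    funext fun j => hγ₀ _ (Ideal.subset_span ⟨j, rfl⟩)
  filter_upwards [isIntegralCurveAt_eventuallyEq_of_contDiffAt contDiff_v.contDiffAt
    curve_eval curve_zero (by rw [eval_g_γ₀])] with t ht
  rw [Ideal.submodule_span_eq, zeroLocus_span]
  rintro _ ⟨j, rfl⟩
  exact congrFun (congrArg Prod.snd ht) j

end Flow

section Dehomogenization

variable (n : ℕ) (h : MvPolynomial (Fin (n + 1)) ℂ)

lemma eval_dehom (y : Fin n → ℂ) : eval y (dehom n h) = eval (Fin.cons 1 y) h := by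
  induction h using MvPolynomial.induction_on with
  | C a => simp [dehom]
  | add h₁ h₂ ih₁ ih₂ => simp_all [dehom]
  | mul_X h i ih =>
    simp only [dehom, map_mul, aeval_X, eval_X] at ih ⊢
    rw [ih]
    cases i using Fin.cases <;> simp

lemma pderiv_dehom (i : Fin n) : pderiv i (dehom n h) = dehom n (pderiv i.succ h) := by
  induction h using MvPolynomial.induction_on with
  | C a => simp [dehom]
  | add h₁ h₂ ih₁ ih₂ => simp_all [dehom]
  | mul_X h j ih =>
    simp only [dehom, map_mul, aeval_X, pderiv_mul, map_add] at ih ⊢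
    rw [ih]
    cases j using Fin.cases with
    | zero => simp
    | succ j =>
      rcases eq_or_ne j i with rfl | hji
      · simp
      · simp [pderiv_X_of_ne hji, pderiv_X_of_ne (Fin.succ_injective n |>.ne hji)]

end Dehomogenization

section SyzygyRank

variable {n d : ℕ} {f : MvPolynomial (Fin (n + 1)) ℂ} {p : Fin (n + 1) → ℂ}

lemma cons_one_tail_div {K : Type*} [Field K] {x : Fin (n + 1) → K} (hx : x 0 ≠ 0) :
    (Fin.cons 1 fun i => x i.succ / x 0 : Fin (n + 1) → K) = (x 0)⁻¹ • x := by
  funext i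
  cases i using Fin.cases <;> simp [hx, div_eq_inv_mul]

lemma forall_eval_pderiv_dehom_eq_zero_iff (hhom : f.IsHomogeneous d) (hp0 : p 0 = 1)
    (hpf : eval p f = 0) :
    (∀ i, eval (fun j => p j.succ) (pderiv i (dehom n f)) = 0) ↔
      ∀ i, eval p (pderiv i f) = 0 := by
  have cons_tail : (Fin.cons 1 fun j => p j.succ : Fin (n + 1) → ℂ) = p := by
    simpa [hp0] using cons_one_tail_div (x := p) (by simp [hp0])
  simp only [pderiv_dehom, eval_dehom, cons_tail, Fin.forall_fin_succ (n := n), iff_and_self]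
  intro hsucc
  simpa [Fin.sum_univ_succ, hsucc, hp0, hpf] using congrArg (eval p) hhom.sum_X_mul_pderiv

lemma AtMostIsolatedSingAt.eventually_eq_smul (hhom : f.IsHomogeneous d) (hp0 : p 0 = 1)
    (hiso : AtMostIsolatedSingAt n f p) :
    ∀ᶠ x in 𝓝 p, x ∈ zeroLocus ℂ (tjurinaIdeal f) → x = x 0 • p := by
  obtain ⟨U, hU, hpU, hUsing⟩ := hiso
  have hp0' : p 0 ≠ 0 := by simp [hp0]
  have x0_ne : ∀ᶠ x in 𝓝 p, x 0 ≠ 0 := (continuous_apply 0).continuousAt.eventually_ne hp0'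
  have chart_cont : ContinuousAt (fun (x : Fin (n + 1) → ℂ) (i : Fin n) => x i.succ / x 0) p :=
    continuousAt_pi.2 fun i =>
      (continuous_apply i.succ).continuousAt.div (continuous_apply 0).continuousAt hp0'
  have chart_mem : ∀ᶠ x in 𝓝 p, (fun i : Fin n => x i.succ / x 0) ∈ U :=
    chart_cont.eventually_mem (hU.mem_nhds (by simpa [hp0] using hpU))
  filter_upwards [x0_ne, chart_mem] with x hx0 hxU hx
  obtain ⟨hfx, hdfx⟩ := mem_zeroLocus_tjurinaIdeal.1 hx
  have chart_eq : (fun i : Fin n => x i.succ / x 0) = fun i => p i.succ := by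
    refine hUsing _ hxU ⟨?_, fun i => ?_⟩
    · rw [eval_dehom, cons_one_tail_div hx0, eval_smul_of_isHomogeneous hhom, hfx, mul_zero]
    · rw [pderiv_dehom, eval_dehom, cons_one_tail_div hx0,
        eval_smul_of_isHomogeneous hhom.pderiv, hdfx, mul_zero]
  funext i
  cases i using Fin.cases with
  | zero => simp [hp0]
  | succ i => simp [← congrFun chart_eq i, mul_div_cancel₀, hx0]

lemma evSyz_subset_span_singleton (hhom : f.IsHomogeneous d) (hp0 : p 0 = 1)
    (hiso : AtMostIsolatedSingAt n f p) (hp : p ∈ zeroLocus ℂ (tjurinaIdeal f)) :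
    evSyz n f p ⊆ Submodule.span ℂ {p} := by
  rintro _ ⟨a, ha, rfl⟩
  let D := mkDerivation ℂ a
  have hDf : D f = 0 := by
    rw [derivation_apply_eq_sum_pderiv]
    simpa only [D, mkDerivation_X] using! ha
  obtain ⟨γ, rfl, hγ⟩ := exists_isIntegralCurveAt_polyVectorField D p
  have γ_sing : ∀ᶠ t in 𝓝 0, γ t ∈ zeroLocus ℂ (tjurinaIdeal f) :=
    eventually_mem_zeroLocus_of_isIntegralCurveAt
      (fun _ => derivation_apply_mem_tjurinaIdeal (hDf ▸ dvd_zero f)) hγ hp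
  have γ_eq : γ =ᶠ[𝓝 0] fun t => γ t 0 • γ 0 := by
    filter_upwards [γ_sing, hγ.continuousAt.eventually (hiso.eventually_eq_smul hhom hp0)]
      with t ht hline using hline ht
  have deriv_γ : HasDerivAt γ (fun i => eval (γ 0) (a i)) 0 := by
    refine hγ.hasDerivAt.congr_deriv (funext fun i => ?_)
    simp only [polyVectorField, D, mkDerivation_X]
  have deriv_line := (hasDerivAt_pi.1 deriv_γ 0).smul_const (γ 0)
  exact Submodule.mem_span_singleton.2
    ⟨_, (deriv_line.congr_of_eventuallyEq γ_eq).unique deriv_γ⟩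

lemma syzRank_le_one_of_mem_zeroLocus_tjurinaIdeal (hhom : f.IsHomogeneous d) (hp0 : p 0 = 1)
    (hiso : AtMostIsolatedSingAt n f p) (hp : p ∈ zeroLocus ℂ (tjurinaIdeal f)) :
    syzRank n f p ≤ 1 :=
  calc syzRank n f p ≤ Module.finrank ℂ (Submodule.span ℂ {p}) :=
        Submodule.finrank_mono
          (Submodule.span_le.2 (evSyz_subset_span_singleton hhom hp0 hiso hp))
    _ ≤ 1 := by simpa using finrank_span_le_card (R := ℂ) ({p} : Set (Fin (n + 1) → ℂ))

/-- The differential of `f` at `p`, as a linear form `v ↦ ∑ v_i ∂f/∂x_i(p)`. -/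
def differentialAt {R σ : Type*} [CommRing R] [Fintype σ] (f : MvPolynomial σ R) (p : σ → R) :
    (σ → R) →ₗ[R] R :=
  Fintype.linearCombination R fun i => eval p (pderiv i f)

lemma span_evSyz_le_ker_differentialAt :
    Submodule.span ℂ (evSyz n f p) ≤ LinearMap.ker (differentialAt f p) := by
  rw [Submodule.span_le]
  rintro _ ⟨a, ha, rfl⟩
  simpa [differentialAt, Fintype.linearCombination_apply] using congrArg (eval p) ha

lemma ker_differentialAt_le_span_evSyz {k : Fin (n + 1)} (hk : eval p (pderiv k f) ≠ 0) :
    LinearMap.ker (differentialAt f p) ≤ Submodule.span ℂ (evSyz n f p) := by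
  intro v hv
  have hv : ∑ i, v i * eval p (pderiv i f) = 0 := hv
  let a : Fin (n + 1) → MvPolynomial (Fin (n + 1)) ℂ := fun i =>
    C (v i) * pderiv k f - if i = k then ∑ j, C (v j) * pderiv j f else 0
  have a_mem : a ∈ syzSet n f := by
    simp only [syzSet, Set.mem_ofPred_eq, a, sub_mul, Finset.sum_sub_distrib, ite_mul, zero_mul,
      Finset.sum_ite_eq', Finset.mem_univ, if_true, Finset.sum_mul]
    exact sub_eq_zero.2 (Finset.sum_congr rfl fun _ _ => by ring)
  have eval_a : (fun i => eval p (a i)) = eval p (pderiv k f) • v := by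
    funext i
    simp [a, apply_ite (eval p), hv, mul_comm]
  exact (Submodule.smul_mem_iff _ hk).1 (Submodule.subset_span ⟨a, a_mem, eval_a⟩)

lemma syzRank_eq_of_eval_pderiv_ne_zero {k : Fin (n + 1)} (hk : eval p (pderiv k f) ≠ 0) :
    syzRank n f p = n := by
  have differential_ne_zero : differentialAt f p ≠ 0 := by
    intro h
    exact hk (by simpa [differentialAt] using LinearMap.congr_fun h (Pi.single k 1))
  have span_eq_ker := le_antisymm span_evSyz_le_ker_differentialAt
    (ker_differentialAt_le_span_evSyz hk)
  have := Module.Dual.finrank_ker_add_one_of_ne_zero differential_ne_zero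
  rw [← span_eq_ker, Module.finrank_fin_fun] at this
  exact Nat.succ_injective this

end SyzygyRank

theorem syzRank_eq_n_iff_smooth_general (n d : ℕ)
    (f : MvPolynomial (Fin (n + 1)) ℂ) (hsf : n ≤ 1 → Squarefree f) (hhom : f.IsHomogeneous d)
    (p : Fin (n + 1) → ℂ) (hp0 : p 0 = 1) (hpf : eval p f = 0)
    (hiso : AtMostIsolatedSingAt n f p) :
    syzRank n f p = n ↔
      ∃ i : Fin n, eval (fun j => p j.succ) (pderiv i (dehom n f)) ≠ 0 := by
  rw [← not_iff_not, not_exists_not, forall_eval_pderiv_dehom_eq_zero_iff hhom hp0 hpf]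
  refine ⟨fun hrank k => by_contra fun hk => hrank (syzRank_eq_of_eval_pderiv_ne_zero hk),
    fun hsing hrank => ?_⟩
  have hn : n ≤ 1 := hrank ▸ syzRank_le_one_of_mem_zeroLocus_tjurinaIdeal hhom hp0 hiso
    (mem_zeroLocus_tjurinaIdeal.2 ⟨hpf, hsing⟩)
  exact not_squarefree_of_eval_pderiv_eq_zero hn hhom hp0 hpf hsing (hsf hn)

/-- If `p` is an at most isolated singular point of `D = V(f)`, then `rk M'_f(p) = n` iff `p`
is a smooth point of `D`, i.e. some partial derivative of the dehomogenization `g` is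
nonzero at `q`. -/
theorem syzRank_eq_n_iff_smooth (n d : ℕ) (hn : 1 ≤ n) (hd : 1 ≤ d)
    (f : MvPolynomial (Fin (n + 1)) ℂ) (hsf : Squarefree f) (hhom : f.IsHomogeneous d)
    (p : Fin (n + 1) → ℂ) (hp0 : p 0 = 1) (hpf : eval p f = 0)
    (hiso : AtMostIsolatedSingAt n f p) :
    syzRank n f p = n ↔
      ∃ i : Fin n, eval (fun j => p j.succ) (pderiv i (dehom n f)) ≠ 0 :=
  syzRank_eq_n_iff_smooth_general n d f (fun _ => hsf) hhom p hp0 hpf hiso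

end
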